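/- Let M : ℝ² → ℝ be smooth with all partial derivatives up to order 9 square-integrable on ℝ², and let Ω := {x∈ℝ³ : x₁ > M(x₂,x₃)}. For every integer k ≥ 2 there exists a constant C > 0 (depending only on k and M) such that for every k-times continuously differentiable f : closure(Ω) → ℝ with ∫_Ω |∇^j f|² dx < ∞ for 0 ≤ j ≤ k, one has ‖f‖_{H^{k-1}(Ω)} ≤ C ‖f‖_{H^{k}(Ω)}^{1-1/k} ‖f‖_{L²(Ω)}^{1/k}, where ‖f‖_{H^m(Ω)}² := ∑_{j=0}^{m} ∫_Ω |∇^j f|² dx. -/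

import Mathlib

/- STATEMENT 6: Gagliardo–Nirenberg interpolation
‖f‖_{H^{k-1}} ≤ C ‖f‖_{H^k}^{1-1/k} ‖f‖_{L²}^{1/k} on the perturbed half-space. -/

noncomputable section

open MeasureTheory Real Set Filter

abbrev E3 : Type := EuclideanSpace ℝ (Fin 3)
abbrev E2 : Type := EuclideanSpace ℝ (Fin 2)

/-- Projection on the tangential variables `x' = (x₂, x₃)`. -/
def proj2 (x : E3) : E2 := (WithLp.equiv 2 (Fin 2 → ℝ)).symm ![x 1, x 2]

/-- The perturbed half-space `Ω = {x : x₁ > M(x₂,x₃)}`. -/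
def Omg (M : E2 → ℝ) : Set E3 := {x : E3 | M (proj2 x) < x 0}

/-- The `H^m(O)` Sobolev norm, `(∑_{j=0}^m ∫_O |∇^j f|² dx)^{1/2}`. -/
def sobNorm (m : ℕ) (O : Set E3) (f : E3 → ℝ) : ℝ :=
  Real.sqrt (∑ j ∈ Finset.range (m + 1), ∫ x in O, ‖iteratedFDeriv ℝ j f x‖ ^ 2)

/-!
By Sobolev embedding `∇M` is bounded, so `M` is Lipschitz and `Ω` is mapped into itself by the
translations along every vector of a cone; this cone contains a basis of `ℝ³`. Let `v` be one of
the basis vectors. Comparing `G (x + t • v) - G x` with `t • DG x v`, squaring, and integrating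
over `x ∈ Ω` (where the translated integrals only get smaller) yields
`t² ∫_Ω ‖DG‖² ≤ C (∫_Ω ‖G‖² + t⁴ ∫_Ω ‖D²G‖²)` for all `t > 0`. Applied to `G = ∇ʲf` and optimised
in `t`, this says that `j ↦ ∫_Ω ‖∇ʲf‖²` is logarithmically convex up to a constant. The Sobolev
norms inherit this convexity, and iterating it from `0` to `k` gives the interpolation inequality.
-/

open scoped ENNReal NNReal

section SquaresInENNReal

lemma ennreal_add_sq_le (a b : ℝ≥0∞) : (a + b) ^ 2 ≤ 2 * (a ^ 2 + b ^ 2) := by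
  have h := ENNReal.rpow_add_le_mul_rpow_add_rpow a b (one_le_two : (1 : ℝ) ≤ 2)
  norm_num at h
  exact h

lemma sq_lintegral_le_measure_univ_mul_lintegral_sq {α : Type*} [MeasurableSpace α]
    (μ : Measure α) {f : α → ℝ≥0∞} (hf : AEMeasurable f μ) :
    (∫⁻ x, f x ∂μ) ^ 2 ≤ μ univ * ∫⁻ x, f x ^ 2 ∂μ := by
  have hsq (a : ℝ≥0∞) : (a ^ (1 / 2 : ℝ)) ^ 2 = a := by
    rw [← ENNReal.rpow_natCast, ← ENNReal.rpow_mul]; norm_num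
  have hölder := ENNReal.lintegral_mul_le_Lp_mul_Lq μ Real.HolderConjugate.two_two hf
    (aemeasurable_const (b := 1))
  simp only [Pi.mul_apply, mul_one, lintegral_const, one_pow, one_mul,
    ENNReal.rpow_ofNat] at hölder
  calc (∫⁻ x, f x ∂μ) ^ 2
      ≤ ((∫⁻ x, f x ^ 2 ∂μ) ^ (1 / 2 : ℝ) * μ univ ^ (1 / 2 : ℝ)) ^ 2 := by gcongr
    _ = μ univ * ∫⁻ x, f x ^ 2 ∂μ := by rw [mul_pow, hsq, hsq, mul_comm]

lemma lintegral_enorm_sq_eq_ofReal_integral {α F : Type*} [NormedAddCommGroup F]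
    [MeasurableSpace α] {μ : Measure α} {g : α → F} (hg : Integrable (fun x => ‖g x‖ ^ 2) μ) :
    ∫⁻ x, ‖g x‖ₑ ^ 2 ∂μ = ENNReal.ofReal (∫ x, ‖g x‖ ^ 2 ∂μ) := by
  simpa [enorm_pow] using (ofReal_integral_norm_eq_lintegral_enorm hg).symm

lemma aemeasurable_enorm_sq_of_continuousOn {α F : Type*} [TopologicalSpace α] [MeasurableSpace α]
    [OpensMeasurableSpace α] {μ : Measure α} [NormedAddCommGroup F] {O : Set α}
    (hO : MeasurableSet O) {g : α → F} (hg : ContinuousOn g O) :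
    AEMeasurable (fun x => ‖g x‖ₑ ^ 2) (μ.restrict O) :=
  (hg.enorm.aemeasurable hO).pow_const 2

end SquaresInENNReal

section Segments

variable {E F : Type*} [NormedAddCommGroup E] [NormedSpace ℝ E] [NormedAddCommGroup F]
  [NormedSpace ℝ F] {O : Set E} {G : E → F} {x v : E} {t : ℝ}

lemma enorm_sub_le_lintegral_fderiv_apply (hO : IsOpen O) (hG : ContDiffOn ℝ 1 G O) (ht : 0 ≤ t)
    (hseg : ∀ s ∈ Icc 0 t, x + s • v ∈ O) :
    ‖G (x + t • v) - G x‖ₑ ≤ ∫⁻ s in Icc 0 t, ‖fderiv ℝ G (x + s • v) v‖ₑ := by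
  have hline (s : ℝ) : HasDerivAt (fun s : ℝ => x + s • v) v s := by
    simpa using ((hasDerivAt_id s).smul_const v).const_add x
  have hftc := enorm_sub_le_lintegral_deriv_of_contDiffOn_Icc
    (hG.comp (f := fun s : ℝ => x + s • v) (by fun_prop) hseg) ht
  have hderiv : ∀ s ∈ Icc 0 t, ‖deriv (G ∘ fun s : ℝ => x + s • v) s‖ₑ =
      ‖fderiv ℝ G (x + s • v) v‖ₑ := fun s hs => by
    have hGs := hG.differentiableOn one_ne_zero |>.differentiableAt (hO.mem_nhds (hseg s hs))
    rw [(hGs.hasFDerivAt.comp_hasDerivAt s (hline s)).deriv]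
  rw [setLIntegral_congr_fun measurableSet_Icc hderiv] at hftc
  simpa using hftc

lemma ofReal_mul_enorm_fderiv_apply_le (hO : IsOpen O) (hG : ContDiffOn ℝ 2 G O) (ht : 0 ≤ t)
    (hseg : ∀ s ∈ Icc 0 t, x + s • v ∈ O) :
    ENNReal.ofReal t * ‖fderiv ℝ G x v‖ₑ ≤ ‖G (x + t • v)‖ₑ + ‖G x‖ₑ +
      ENNReal.ofReal t * ∫⁻ s in Icc 0 t, ‖fderiv ℝ (fderiv ℝ G) (x + s • v) v v‖ₑ := by
  set A := fderiv ℝ G x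
  set K := ∫⁻ s in Icc 0 t, ‖fderiv ℝ (fderiv ℝ G) (x + s • v) v v‖ₑ
  have hG₁ : ContDiffOn ℝ 1 (fderiv ℝ G) O := hG.fderiv_of_isOpen hO (by norm_num)
  have hGd : ∀ s ∈ Icc 0 t, DifferentiableAt ℝ G (x + s • v) := fun s hs =>
    hG.differentiableOn two_ne_zero |>.differentiableAt (hO.mem_nhds (hseg s hs))
  have hG₁d : ∀ s ∈ Icc 0 t, DifferentiableAt ℝ (fderiv ℝ G) (x + s • v) := fun s hs =>
    hG₁.differentiableOn one_ne_zero |>.differentiableAt (hO.mem_nhds (hseg s hs))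
  have hincrement : ∀ s ∈ Icc 0 t, ‖fderiv ℝ G (x + s • v) v - A v‖ₑ ≤ K := fun s hs => by
    have hsub : Icc 0 s ⊆ Icc 0 t := Icc_subset_Icc_right hs.2
    calc ‖fderiv ℝ G (x + s • v) v - A v‖ₑ
        ≤ ∫⁻ r in Icc 0 s, ‖fderiv ℝ (fun y => fderiv ℝ G y v) (x + r • v) v‖ₑ :=
          enorm_sub_le_lintegral_fderiv_apply (G := fun y => fderiv ℝ G y v) hO
            (hG₁.clm_apply contDiffOn_const) hs.1 fun r hr => hseg r (hsub hr)
      _ = ∫⁻ r in Icc 0 s, ‖fderiv ℝ (fderiv ℝ G) (x + r • v) v v‖ₑ :=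
          setLIntegral_congr_fun measurableSet_Icc fun r hr => by
            simp [fderiv_clm_apply (hG₁d r (hsub hr)) (differentiableAt_const v)]
      _ ≤ K := lintegral_mono_set hsub
  have hremainder : ‖G (x + t • v) - G x - t • A v‖ₑ ≤ ENNReal.ofReal t * K := by
    calc ‖G (x + t • v) - G x - t • A v‖ₑ
        = ‖(G (x + t • v) - A (x + t • v)) - (G x - A x)‖ₑ := by
          congr 1; simp only [map_add, map_smul]; abel
      _ ≤ ∫⁻ s in Icc 0 t, ‖fderiv ℝ (fun y => G y - A y) (x + s • v) v‖ₑ :=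
          enorm_sub_le_lintegral_fderiv_apply (G := fun y => G y - A y) hO
            ((hG.of_le one_le_two).sub A.contDiff.contDiffOn) ht hseg
      _ ≤ ∫⁻ _ in Icc 0 t, K := setLIntegral_mono' measurableSet_Icc fun s hs => by
          rw [fderiv_fun_sub (hGd s hs) A.differentiableAt, A.fderiv]
          exact hincrement s hs
      _ = ENNReal.ofReal t * K := by simp [mul_comm]
  calc ENNReal.ofReal t * ‖A v‖ₑ = ‖t • A v‖ₑ := by rw [enorm_smul, Real.enorm_of_nonneg ht]
    _ = ‖G (x + t • v) - G x - (G (x + t • v) - G x - t • A v)‖ₑ := by congr 1; abel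
    _ ≤ ‖G (x + t • v)‖ₑ + ‖G x‖ₑ + ENNReal.ofReal t * K :=
      enorm_sub_le.trans (add_le_add enorm_sub_le hremainder)

lemma continuousOn_comp_add_smul (hseg : ∀ s ∈ Icc 0 t, x + s • v ∈ O) {X : Type*}
    [TopologicalSpace X] {g : E → X} (hg : ContinuousOn g O) :
    ContinuousOn (fun s : ℝ => g (x + s • v)) (Icc 0 t) :=
  hg.comp (by fun_prop) hseg

lemma ofReal_sq_mul_enorm_fderiv_apply_sq_le (hO : IsOpen O) (hG : ContDiffOn ℝ 2 G O)
    (ht : 0 ≤ t) (hseg : ∀ s ∈ Icc 0 t, x + s • v ∈ O) :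
    ENNReal.ofReal t ^ 2 * ‖fderiv ℝ G x v‖ₑ ^ 2 ≤
      4 * ‖G (x + t • v)‖ₑ ^ 2 + 4 * ‖G x‖ₑ ^ 2 + 2 * ENNReal.ofReal t ^ 3 *
        ∫⁻ s in Icc 0 t, ‖fderiv ℝ (fderiv ℝ G) (x + s • v) v v‖ₑ ^ 2 := by
  set τ := ENNReal.ofReal t
  set w : ℝ → ℝ≥0∞ := fun s => ‖fderiv ℝ (fderiv ℝ G) (x + s • v) v v‖ₑ
  have hw : ContinuousOn w (Icc 0 t) :=
    continuousOn_comp_add_smul (g := fun y => ‖fderiv ℝ (fderiv ℝ G) y v v‖ₑ) hseg <|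
      ((((hG.fderiv_of_isOpen hO (m := 1) (by norm_num)).continuousOn_fderiv_of_isOpen hO
        le_rfl).clm_apply continuousOn_const).clm_apply continuousOn_const).enorm
  have hcs : (∫⁻ s in Icc 0 t, w s) ^ 2 ≤ τ * ∫⁻ s in Icc 0 t, w s ^ 2 := by
    simpa using sq_lintegral_le_measure_univ_mul_lintegral_sq (volume.restrict (Icc 0 t))
      (hw.aemeasurable measurableSet_Icc)
  calc τ ^ 2 * ‖fderiv ℝ G x v‖ₑ ^ 2 = (τ * ‖fderiv ℝ G x v‖ₑ) ^ 2 := by ring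
    _ ≤ (‖G (x + t • v)‖ₑ + ‖G x‖ₑ + τ * ∫⁻ s in Icc 0 t, w s) ^ 2 := by
      gcongr; exact ofReal_mul_enorm_fderiv_apply_le hO hG ht hseg
    _ ≤ 2 * ((‖G (x + t • v)‖ₑ + ‖G x‖ₑ) ^ 2 + (τ * ∫⁻ s in Icc 0 t, w s) ^ 2) :=
      ennreal_add_sq_le _ _
    _ ≤ 2 * (2 * (‖G (x + t • v)‖ₑ ^ 2 + ‖G x‖ₑ ^ 2) + τ ^ 2 * (τ * ∫⁻ s in Icc 0 t, w s ^ 2)) := by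
      rw [mul_pow]; gcongr; exact ennreal_add_sq_le _ _
    _ = _ := by ring

lemma enorm_sq_le_lintegral_unit_segment (hG : ContDiff ℝ 1 G) (x v : E) :
    ‖G x‖ₑ ^ 2 ≤ 2 * ((∫⁻ s in Icc (0 : ℝ) 1, ‖G (x + s • v)‖ₑ ^ 2) +
      ∫⁻ s in Icc (0 : ℝ) 1, ‖fderiv ℝ G (x + s • v) v‖ₑ ^ 2) := by
  have hw : Continuous fun s : ℝ => ‖fderiv ℝ G (x + s • v) v‖ₑ :=
    (((hG.continuous_fderiv one_ne_zero).comp (by fun_prop : Continuous fun s : ℝ => x + s • v)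
      ).clm_apply continuous_const).enorm
  set K := ∫⁻ s in Icc (0 : ℝ) 1, ‖fderiv ℝ G (x + s • v) v‖ₑ
  have hcs : K ^ 2 ≤ ∫⁻ s in Icc (0 : ℝ) 1, ‖fderiv ℝ G (x + s • v) v‖ₑ ^ 2 := by
    simpa using sq_lintegral_le_measure_univ_mul_lintegral_sq (volume.restrict (Icc (0 : ℝ) 1))
      hw.aemeasurable
  have hpointwise : ∀ s ∈ Icc (0 : ℝ) 1, ‖G x‖ₑ ^ 2 ≤ 2 * (‖G (x + s • v)‖ₑ ^ 2 + K ^ 2) :=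
    fun s hs => by
      have hincrement : ‖G (x + s • v) - G x‖ₑ ≤ K :=
        (enorm_sub_le_lintegral_fderiv_apply isOpen_univ hG.contDiffOn hs.1
          fun _ _ => mem_univ _).trans (lintegral_mono_set (Icc_subset_Icc_right hs.2))
      calc ‖G x‖ₑ ^ 2 = ‖G (x + s • v) - (G (x + s • v) - G x)‖ₑ ^ 2 := by rw [sub_sub_cancel]
        _ ≤ (‖G (x + s • v)‖ₑ + K) ^ 2 := by
          gcongr; exact enorm_sub_le.trans (by gcongr)
        _ ≤ 2 * (‖G (x + s • v)‖ₑ ^ 2 + K ^ 2) := ennreal_add_sq_le _ _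
  calc ‖G x‖ₑ ^ 2 = ∫⁻ _ in Icc (0 : ℝ) 1, ‖G x‖ₑ ^ 2 := by simp
    _ ≤ ∫⁻ s in Icc (0 : ℝ) 1, 2 * (‖G (x + s • v)‖ₑ ^ 2 + K ^ 2) :=
      setLIntegral_mono' measurableSet_Icc hpointwise
    _ = 2 * ((∫⁻ s in Icc (0 : ℝ) 1, ‖G (x + s • v)‖ₑ ^ 2) + K ^ 2) := by
      rw [lintegral_const_mul' _ _ ENNReal.ofNat_ne_top, lintegral_add_right _ measurable_const]
      simp
    _ ≤ _ := by gcongr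

end Segments

section SobolevEmbedding

variable {ι : Type*}

lemma le_sum_lmarginal_of_le_lintegral_update [DecidableEq ι] {X : ι → Type*}
    [∀ i, MeasurableSpace (X i)] {μ : ∀ i, Measure (X i)} [∀ i, SigmaFinite (μ i)] {n : ℕ}
    {w : ℕ → (∀ i, X i) → ℝ≥0∞} (hw : ∀ j ≤ n, Measurable (w j))
    (hstep : ∀ j < n, ∀ i y, w j y ≤ 2 * ((∫⁻ s, w j (Function.update y i s) ∂μ i) +
      ∫⁻ s, w (j + 1) (Function.update y i s) ∂μ i))
    (s : Finset ι) {m : ℕ} (hm : m + s.card ≤ n) (y : ∀ i, X i) :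
    w m y ≤ 4 ^ s.card * ∑ j ∈ Finset.range (s.card + 1), lmarginal μ s (w (m + j)) y := by
  induction s using Finset.induction_on generalizing m y with
  | empty => simp
  | insert i s hi ih =>
    rw [Finset.card_insert_of_notMem hi] at hm ⊢
    set c := s.card
    set I : ℕ → ℝ≥0∞ := fun j => lmarginal μ (insert i s) (w j) y
    have hslice : ∀ q, q + c ≤ n → ∫⁻ r, w q (Function.update y i r) ∂μ i ≤
        4 ^ c * ∑ j ∈ Finset.range (c + 1), I (q + j) := fun q hq => by
      have hmeas : ∀ j ∈ Finset.range (c + 1), Measurable (w (q + j)) := fun j hj =>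
        hw _ (by grind)
      calc ∫⁻ r, w q (Function.update y i r) ∂μ i
          ≤ ∫⁻ r, 4 ^ c * ∑ j ∈ Finset.range (c + 1),
              lmarginal μ s (w (q + j)) (Function.update y i r) ∂μ i :=
            lintegral_mono fun r => ih hq _
        _ = 4 ^ c * ∑ j ∈ Finset.range (c + 1),
              ∫⁻ r, lmarginal μ s (w (q + j)) (Function.update y i r) ∂μ i := by
            rw [lintegral_const_mul' _ _ (by finiteness), lintegral_finsetSum']
            exact fun j hj =>
              (((hmeas j hj).lmarginal μ).comp (measurable_update y)).aemeasurable
        _ = 4 ^ c * ∑ j ∈ Finset.range (c + 1), I (q + j) := by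
            congr 1
            exact Finset.sum_congr rfl fun j hj => (lmarginal_insert _ (hmeas j hj) hi y).symm
    calc w m y ≤ 2 * (4 ^ c * ∑ j ∈ Finset.range (c + 1), I (m + j) +
          4 ^ c * ∑ j ∈ Finset.range (c + 1), I (m + 1 + j)) :=
          (hstep m (by lia) i y).trans (by gcongr; exacts [hslice m (by lia), hslice _ (by lia)])
      _ ≤ 2 * (4 ^ c * ∑ j ∈ Finset.range (c + 1 + 1), I (m + j) +
          4 ^ c * ∑ j ∈ Finset.range (c + 1 + 1), I (m + j)) := by
          gcongr 2 * (4 ^ c * ?_ + 4 ^ c * ?_)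
          · exact (Finset.sum_range_succ _ _).ge.trans' le_self_add
          · rw [Finset.sum_range_succ' _ (c + 1)]
            simp only [add_assoc, add_comm 1]
            exact le_self_add
      _ = _ := by ring

lemma toLp_update_add [DecidableEq ι] (y : ι → ℝ) (i : ι) (s : ℝ) :
    WithLp.toLp 2 (Function.update y i (y i + s)) =
      WithLp.toLp 2 y + s • EuclideanSpace.single i (1 : ℝ) := by
  ext j
  obtain rfl | hj := eq_or_ne j i <;> simp [*]

variable [Fintype ι] {V : Type*} [NormedAddCommGroup V] [NormedSpace ℝ V]

lemma enorm_sq_le_lintegral_update [DecidableEq ι] {h : EuclideanSpace ℝ ι → V}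
    (hh : ContDiff ℝ 1 h) (i : ι) (y : ι → ℝ) :
    ‖h (WithLp.toLp 2 y)‖ₑ ^ 2 ≤
      2 * ((∫⁻ s, ‖h (WithLp.toLp 2 (Function.update y i s))‖ₑ ^ 2) +
        ∫⁻ s, ‖fderiv ℝ h (WithLp.toLp 2 (Function.update y i s))‖ₑ ^ 2) := by
  set e : EuclideanSpace ℝ ι := EuclideanSpace.single i 1
  have htranslate (g : EuclideanSpace ℝ ι → ℝ≥0∞) :
      ∫⁻ s in Icc (0 : ℝ) 1, g (WithLp.toLp 2 y + s • e) ≤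
        ∫⁻ s, g (WithLp.toLp 2 (Function.update y i s)) := by
    rw [← lintegral_add_left_eq_self (fun s => g (WithLp.toLp 2 (Function.update y i s))) (y i)]
    simp only [toLp_update_add]
    exact setLIntegral_le_lintegral _ _
  have hnorm (A : EuclideanSpace ℝ ι →L[ℝ] V) : ‖A e‖ₑ ≤ ‖A‖ₑ := by
    simpa [← ofReal_norm, e] using A.le_opENorm e
  calc ‖h (WithLp.toLp 2 y)‖ₑ ^ 2
      ≤ 2 * ((∫⁻ s in Icc (0 : ℝ) 1, ‖h (WithLp.toLp 2 y + s • e)‖ₑ ^ 2) +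
          ∫⁻ s in Icc (0 : ℝ) 1, ‖fderiv ℝ h (WithLp.toLp 2 y + s • e) e‖ₑ ^ 2) :=
        enorm_sq_le_lintegral_unit_segment hh _ e
    _ ≤ 2 * ((∫⁻ s in Icc (0 : ℝ) 1, ‖h (WithLp.toLp 2 y + s • e)‖ₑ ^ 2) +
          ∫⁻ s in Icc (0 : ℝ) 1, ‖fderiv ℝ h (WithLp.toLp 2 y + s • e)‖ₑ ^ 2) := by
        gcongr; exact hnorm _
    _ ≤ _ := by
        gcongr 2 * (?_ + ?_)
        exacts [htranslate fun x => ‖h x‖ₑ ^ 2, htranslate fun x => ‖fderiv ℝ h x‖ₑ ^ 2]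

theorem enorm_sq_le_sum_lintegral_iteratedFDeriv {h : EuclideanSpace ℝ ι → V}
    (hh : ContDiff ℝ (Fintype.card ι) h) (x : EuclideanSpace ℝ ι) :
    ‖h x‖ₑ ^ 2 ≤ 4 ^ Fintype.card ι *
      ∑ j ∈ Finset.range (Fintype.card ι + 1), ∫⁻ y, ‖iteratedFDeriv ℝ j h y‖ₑ ^ 2 := by
  classical
  set n := Fintype.card ι
  have hmeas : ∀ j ≤ n, Measurable fun y => ‖iteratedFDeriv ℝ j h y‖ₑ ^ 2 := fun j hj =>
    (hh.continuous_iteratedFDeriv (mod_cast hj)).enorm.measurable.pow_const 2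
  have hmarginal := le_sum_lmarginal_of_le_lintegral_update (n := n) (m := 0)
    (μ := fun _ : ι => (volume : Measure ℝ))
    (w := fun j y => ‖iteratedFDeriv ℝ j h (WithLp.toLp 2 y)‖ₑ ^ 2)
    (fun j hj => (hmeas j hj).comp (PiLp.volume_preserving_toLp ι).measurable)
    (fun j hj i y => by
      have hj₁ : ContDiff ℝ 1 (iteratedFDeriv ℝ j h) :=
        hh.iteratedFDeriv_right (by exact_mod_cast (by lia : 1 + j ≤ n))
      simpa only [← ofReal_norm, norm_fderiv_iteratedFDeriv] using
        enorm_sq_le_lintegral_update hj₁ i y)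
    Finset.univ (by simp [n]) (WithLp.ofLp x)
  simp only [lmarginal_univ, Finset.card_univ, WithLp.toLp_ofLp] at hmarginal
  calc ‖h x‖ₑ ^ 2 = ‖iteratedFDeriv ℝ 0 h x‖ₑ ^ 2 := by
        simp only [← ofReal_norm, norm_iteratedFDeriv_zero]
    _ ≤ _ := hmarginal
    _ = _ := by
      congr! 2 with j hj
      rw [← volume_pi, zero_add]
      exact (PiLp.volume_preserving_toLp ι).lintegral_comp (hmeas j (by grind))

theorem exists_lipschitzWith_of_integrable_iteratedFDeriv_sq {f : EuclideanSpace ℝ ι → V}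
    (hf : ContDiff ℝ (Fintype.card ι + 1) f)
    (hint : ∀ j ≤ Fintype.card ι, Integrable fun x => ‖iteratedFDeriv ℝ (j + 1) f x‖ ^ 2) :
    ∃ L : ℝ≥0, LipschitzWith L f := by
  set S : ℝ≥0∞ := 4 ^ Fintype.card ι * ∑ j ∈ Finset.range (Fintype.card ι + 1),
    ∫⁻ y, ‖iteratedFDeriv ℝ j (fderiv ℝ f) y‖ₑ ^ 2
  have hS : S ≠ ⊤ := by
    refine ENNReal.mul_ne_top (by finiteness) (ENNReal.sum_ne_top.2 fun j hj => ?_)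
    simp only [← ofReal_norm, norm_iteratedFDeriv_fderiv]
    simp only [ofReal_norm, lintegral_enorm_sq_eq_ofReal_integral (hint j (by grind))]
    exact ENNReal.ofReal_ne_top
  refine ⟨NNReal.sqrt S.toNNReal, lipschitzWith_of_nnnorm_fderiv_le
    (hf.differentiable (by simp)) fun x => NNReal.le_sqrt_iff_sq_le.2 ?_⟩
  rw [← ENNReal.coe_le_coe, ENNReal.coe_toNNReal hS, ENNReal.coe_pow]
  exact enorm_sq_le_sum_lintegral_iteratedFDeriv (hf.fderiv_right le_rfl) x

end SobolevEmbedding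

section BasisBounds

variable {ι E F : Type*} [Fintype ι] [NormedAddCommGroup E] [NormedSpace ℝ E]
  [NormedAddCommGroup F] [NormedSpace ℝ F]

/-- The constant in the comparison `‖A‖² ≤ C * ∑ i, ‖A (b i)‖²` of the operator norm of a linear
map with its values on a basis. -/
def basisOpNormConst (b : Module.Basis ι ℝ E) : ℝ≥0 :=
  (Fintype.card ι * ‖(b.equivFunL : E →L[ℝ] ι → ℝ)‖₊) ^ 2

lemma enorm_sq_le_basisOpNormConst_mul_sum (b : Module.Basis ι ℝ E) (A : E →L[ℝ] F) :
    ‖A‖ₑ ^ 2 ≤ basisOpNormConst b * ∑ i, ‖A (b i)‖ₑ ^ 2 := by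
  have hsup : ∀ i, ‖A (b i)‖₊ ≤ NNReal.sqrt (∑ i, ‖A (b i)‖₊ ^ 2) := fun i =>
    NNReal.le_sqrt_iff_sq_le.2 <|
      Finset.single_le_sum (f := fun i => ‖A (b i)‖₊ ^ 2) (fun _ _ => zero_le) (Finset.mem_univ i)
  have hop := pow_le_pow_left₀ zero_le (b.opNNNorm_le _ hsup) 2
  rw [mul_pow, NNReal.sq_sqrt, nsmul_eq_mul] at hop
  simp only [enorm_eq_nnnorm]
  exact_mod_cast hop

/-- The constant in `t² ∫ ‖DG‖² ≤ C (∫ ‖G‖² + t⁴ ∫ ‖D²G‖²)` on domains receding in the directions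
`b i`. It is given explicitly because it must not depend on the codomain of `G`, which is replaced
by spaces of multilinear maps when the inequality is applied to iterated derivatives. -/
def interpolationConst (b : Module.Basis ι ℝ E) : ℝ≥0 :=
  basisOpNormConst b * ∑ i, (8 + 2 * ‖b i‖₊ ^ 4)

end BasisBounds

section RecessionDirections

variable {E F : Type*} [NormedAddCommGroup E] [NormedSpace ℝ E] [NormedAddCommGroup F]
  [NormedSpace ℝ F]

/-- The vector `v` is a recession direction of `O`: every ray with direction `v` that starts in `O`
stays in `O`. -/
def IsRecessionDirection (O : Set E) (v : E) : Prop :=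
  ∀ ⦃x⦄, x ∈ O → ∀ ⦃t : ℝ⦄, 0 ≤ t → x + t • v ∈ O

variable [MeasurableSpace E] [BorelSpace E] {μ : Measure E} [μ.IsAddRightInvariant]
  {O : Set E} {v : E} {t : ℝ}

lemma setLIntegral_comp_add_smul_le (hO : IsOpen O) (hv : IsRecessionDirection O v) (ht : 0 ≤ t)
    (g : E → ℝ≥0∞) : ∫⁻ x in O, g (x + t • v) ∂μ ≤ ∫⁻ x in O, g x ∂μ := by
  rw [← lintegral_indicator hO.measurableSet, ← lintegral_indicator hO.measurableSet,
    ← lintegral_add_right_eq_self (O.indicator g) (t • v)]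
  exact lintegral_mono <| indicator_le fun x hx => by rw [indicator_of_mem (hv hx ht)]

variable [SFinite μ]

lemma setLIntegral_lintegral_Icc_comp_add_smul_le (hO : IsOpen O) (hv : IsRecessionDirection O v)
    {g : E → ℝ≥0∞} (hg : ContinuousOn g O) :
    ∫⁻ x in O, (∫⁻ s in Icc 0 t, g (x + s • v)) ∂μ ≤ ENNReal.ofReal t * ∫⁻ x in O, g x ∂μ := by
  have hmeas : AEMeasurable (Function.uncurry fun (x : E) (s : ℝ) => g (x + s • v))
      ((μ.restrict O).prod (volume.restrict (Icc 0 t))) := by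
    rw [Measure.prod_restrict]
    exact (hg.comp (f := fun p : E × ℝ => p.1 + p.2 • v) (by fun_prop)
      fun p hp => hv hp.1 hp.2.1).aemeasurable (hO.measurableSet.prod measurableSet_Icc)
  calc ∫⁻ x in O, (∫⁻ s in Icc 0 t, g (x + s • v)) ∂μ
      = ∫⁻ s in Icc 0 t, ∫⁻ x in O, g (x + s • v) ∂μ := lintegral_lintegral_swap hmeas
    _ ≤ ∫⁻ _ in Icc 0 t, ∫⁻ x in O, g x ∂μ := setLIntegral_mono' measurableSet_Icc fun s hs =>
        setLIntegral_comp_add_smul_le hO hv hs.1 g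
    _ = ENNReal.ofReal t * ∫⁻ x in O, g x ∂μ := by simp [mul_comm]

variable {G : E → F}

lemma setLIntegral_enorm_fderiv_apply_sq_le (hO : IsOpen O) (hv : IsRecessionDirection O v)
    (hG : ContDiffOn ℝ 2 G O) (ht : 0 ≤ t) :
    ENNReal.ofReal t ^ 2 * ∫⁻ x in O, ‖fderiv ℝ G x v‖ₑ ^ 2 ∂μ ≤
      8 * ∫⁻ x in O, ‖G x‖ₑ ^ 2 ∂μ + 2 * ENNReal.ofReal t ^ 4 *
        ∫⁻ x in O, ‖fderiv ℝ (fderiv ℝ G) x v v‖ₑ ^ 2 ∂μ := by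
  set τ := ENNReal.ofReal t
  set w : E → ℝ≥0∞ := fun x => ‖fderiv ℝ (fderiv ℝ G) x v v‖ₑ ^ 2
  have hw : ContinuousOn w O :=
    (ENNReal.continuous_pow 2).comp_continuousOn
      ((((hG.fderiv_of_isOpen hO (m := 1) (by norm_num)).continuousOn_fderiv_of_isOpen hO
        le_rfl).clm_apply continuousOn_const).clm_apply continuousOn_const).enorm
  have hG₀ : AEMeasurable (fun x => 4 * ‖G x‖ₑ ^ 2) (μ.restrict O) :=
    (aemeasurable_enorm_sq_of_continuousOn hO.measurableSet hG.continuousOn).const_mul 4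
  have hGt : AEMeasurable (fun x => 4 * ‖G (x + t • v)‖ₑ ^ 2) (μ.restrict O) :=
    (aemeasurable_enorm_sq_of_continuousOn hO.measurableSet
      (hG.continuousOn.comp (by fun_prop) fun x hx => hv hx ht)).const_mul 4
  calc τ ^ 2 * ∫⁻ x in O, ‖fderiv ℝ G x v‖ₑ ^ 2 ∂μ
      = ∫⁻ x in O, τ ^ 2 * ‖fderiv ℝ G x v‖ₑ ^ 2 ∂μ :=
        (lintegral_const_mul' _ _ (by finiteness)).symm
    _ ≤ ∫⁻ x in O, (4 * ‖G (x + t • v)‖ₑ ^ 2 + 4 * ‖G x‖ₑ ^ 2 +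
          2 * τ ^ 3 * ∫⁻ s in Icc 0 t, w (x + s • v)) ∂μ :=
        setLIntegral_mono' hO.measurableSet fun x hx =>
          ofReal_sq_mul_enorm_fderiv_apply_sq_le hO hG ht fun s hs => hv hx hs.1
    _ = 4 * ∫⁻ x in O, ‖G (x + t • v)‖ₑ ^ 2 ∂μ + 4 * ∫⁻ x in O, ‖G x‖ₑ ^ 2 ∂μ +
          2 * τ ^ 3 * ∫⁻ x in O, (∫⁻ s in Icc 0 t, w (x + s • v)) ∂μ := by
        rw [lintegral_add_left' (hGt.fun_add hG₀), lintegral_add_left' hGt]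
        simp only [lintegral_const_mul' _ _ (show (4 : ℝ≥0∞) ≠ ⊤ by finiteness),
          lintegral_const_mul' _ _ (show 2 * τ ^ 3 ≠ ⊤ by finiteness)]
    _ ≤ 4 * ∫⁻ x in O, ‖G x‖ₑ ^ 2 ∂μ + 4 * ∫⁻ x in O, ‖G x‖ₑ ^ 2 ∂μ +
          2 * τ ^ 3 * (τ * ∫⁻ x in O, w x ∂μ) := by
        gcongr 4 * ?_ + _ + _ * ?_
        · exact setLIntegral_comp_add_smul_le hO hv ht fun x => ‖G x‖ₑ ^ 2
        · exact setLIntegral_lintegral_Icc_comp_add_smul_le hO hv hw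
    _ = 8 * ∫⁻ x in O, ‖G x‖ₑ ^ 2 ∂μ + 2 * τ ^ 4 * ∫⁻ x in O, w x ∂μ := by ring

lemma setLIntegral_enorm_fderiv_apply_sq_le_const_mul (hO : IsOpen O)
    (hv : IsRecessionDirection O v) (hG : ContDiffOn ℝ 2 G O) (ht : 0 ≤ t) :
    ENNReal.ofReal t ^ 2 * ∫⁻ x in O, ‖fderiv ℝ G x v‖ₑ ^ 2 ∂μ ≤
      (8 + 2 * ‖v‖ₑ ^ 4) * (∫⁻ x in O, ‖G x‖ₑ ^ 2 ∂μ +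
        ENNReal.ofReal t ^ 4 * ∫⁻ x in O, ‖fderiv ℝ (fderiv ℝ G) x‖ₑ ^ 2 ∂μ) := by
  set τ := ENNReal.ofReal t
  set a₀ := ∫⁻ x in O, ‖G x‖ₑ ^ 2 ∂μ
  set a₂ := ∫⁻ x in O, ‖fderiv ℝ (fderiv ℝ G) x‖ₑ ^ 2 ∂μ
  have hhessian : ∫⁻ x in O, ‖fderiv ℝ (fderiv ℝ G) x v v‖ₑ ^ 2 ∂μ ≤ ‖v‖ₑ ^ 4 * a₂ := by
    rw [← lintegral_const_mul' _ _ (by finiteness)]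
    refine lintegral_mono fun x => ?_
    calc ‖fderiv ℝ (fderiv ℝ G) x v v‖ₑ ^ 2
        ≤ (‖fderiv ℝ (fderiv ℝ G) x‖ₑ * ‖v‖ₑ * ‖v‖ₑ) ^ 2 := by
          gcongr
          exact (ContinuousLinearMap.le_opENorm _ _).trans
            (by gcongr; exact ContinuousLinearMap.le_opENorm _ _)
      _ = ‖v‖ₑ ^ 4 * ‖fderiv ℝ (fderiv ℝ G) x‖ₑ ^ 2 := by ring
  calc τ ^ 2 * ∫⁻ x in O, ‖fderiv ℝ G x v‖ₑ ^ 2 ∂μ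
      ≤ 8 * a₀ + 2 * τ ^ 4 * (‖v‖ₑ ^ 4 * a₂) :=
        (setLIntegral_enorm_fderiv_apply_sq_le hO hv hG ht).trans (by gcongr)
    _ ≤ 8 * a₀ + 2 * τ ^ 4 * (‖v‖ₑ ^ 4 * a₂) + (8 * τ ^ 4 * a₂ + 2 * ‖v‖ₑ ^ 4 * a₀) :=
        le_self_add
    _ = (8 + 2 * ‖v‖ₑ ^ 4) * (a₀ + τ ^ 4 * a₂) := by ring

theorem setLIntegral_enorm_fderiv_sq_le {ι : Type*} [Fintype ι] (b : Module.Basis ι ℝ E)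
    (hO : IsOpen O) (hb : ∀ i, IsRecessionDirection O (b i)) (hG : ContDiffOn ℝ 2 G O)
    (ht : 0 ≤ t) :
    ENNReal.ofReal t ^ 2 * ∫⁻ x in O, ‖fderiv ℝ G x‖ₑ ^ 2 ∂μ ≤
      interpolationConst b * (∫⁻ x in O, ‖G x‖ₑ ^ 2 ∂μ +
        ENNReal.ofReal t ^ 4 * ∫⁻ x in O, ‖fderiv ℝ (fderiv ℝ G) x‖ₑ ^ 2 ∂μ) := by
  set τ := ENNReal.ofReal t
  set A := ∫⁻ x in O, ‖G x‖ₑ ^ 2 ∂μ + τ ^ 4 * ∫⁻ x in O, ‖fderiv ℝ (fderiv ℝ G) x‖ₑ ^ 2 ∂μ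
  have hmeas : ∀ i ∈ Finset.univ, AEMeasurable (fun x => ‖fderiv ℝ G x (b i)‖ₑ ^ 2)
      (μ.restrict O) := fun i _ =>
    aemeasurable_enorm_sq_of_continuousOn hO.measurableSet
      ((hG.continuousOn_fderiv_of_isOpen hO one_le_two).clm_apply continuousOn_const)
  calc τ ^ 2 * ∫⁻ x in O, ‖fderiv ℝ G x‖ₑ ^ 2 ∂μ
      ≤ τ ^ 2 * ∫⁻ x in O, basisOpNormConst b * ∑ i, ‖fderiv ℝ G x (b i)‖ₑ ^ 2 ∂μ := by
        gcongr; exact enorm_sq_le_basisOpNormConst_mul_sum b _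
    _ = basisOpNormConst b * ∑ i, τ ^ 2 * ∫⁻ x in O, ‖fderiv ℝ G x (b i)‖ₑ ^ 2 ∂μ := by
        rw [lintegral_const_mul' _ _ (by finiteness), lintegral_finsetSum' _ hmeas,
          ← Finset.mul_sum, mul_left_comm]
    _ ≤ basisOpNormConst b * ∑ i, (8 + 2 * ‖b i‖ₑ ^ 4) * A := by
        gcongr _ * ∑ i, ?_ with i
        exact setLIntegral_enorm_fderiv_apply_sq_le_const_mul hO (hb i) hG ht
    _ = interpolationConst b * A := by
        simp [interpolationConst, ← Finset.sum_mul, mul_assoc, enorm_eq_nnnorm]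

end RecessionDirections

section LogConvexity

lemma sq_le_four_mul_sq_mul_of_forall_pos {a₀ a₁ a₂ C : ℝ} (h₀ : 0 ≤ a₀) (h₁ : 0 ≤ a₁)
    (h₂ : 0 ≤ a₂) (hC : 0 ≤ C) (h : ∀ t, 0 < t → t ^ 2 * a₁ ≤ C * (a₀ + t ^ 4 * a₂)) :
    a₁ ^ 2 ≤ 4 * C ^ 2 * (a₀ * a₂) := by
  have hquadratic : ∀ τ : ℝ, 0 ≤ C * a₂ * (τ * τ) + -a₁ * τ + C * a₀ := fun τ => by
    obtain hτ | hτ := le_or_gt τ 0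
    · have : 0 ≤ C * a₂ * (τ * τ) := mul_nonneg (by positivity) (mul_self_nonneg τ)
      have : 0 ≤ -a₁ * τ := by nlinarith
      positivity
    · have hsq : √τ ^ 2 = τ := Real.sq_sqrt hτ.le
      have hfour : √τ ^ 4 = τ * τ := by rw [show 4 = 2 * 2 from rfl, pow_mul, hsq, sq]
      have ht := h √τ (Real.sqrt_pos.2 hτ)
      rw [hsq, hfour] at ht
      linarith
  have := discrim_le_zero hquadratic
  rw [discrim] at this
  linarith

lemma sq_sum_range_succ_le {a : ℕ → ℝ} (ha : ∀ i, 0 ≤ a i) {C : ℝ} (hC : 0 ≤ C) {j : ℕ}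
    (h : a (j + 1) ^ 2 ≤ C * (a j * a (j + 2))) :
    (∑ i ∈ Finset.range (j + 2), a i) ^ 2 ≤
      2 * (1 + C) * ((∑ i ∈ Finset.range (j + 1), a i) * ∑ i ∈ Finset.range (j + 3), a i) := by
  set S : ℕ → ℝ := fun m => ∑ i ∈ Finset.range m, a i
  have hmono : Monotone S := (Finset.sum_mono_set_of_nonneg ha).comp Finset.range_mono
  have hlast (m : ℕ) : a m ≤ S (m + 1) :=
    Finset.single_le_sum (fun i _ => ha i) (Finset.self_mem_range_succ m)
  have hSnonneg (m : ℕ) : 0 ≤ S m := Finset.sum_nonneg fun i _ => ha i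
  calc S (j + 2) ^ 2 = (S (j + 1) + a (j + 1)) ^ 2 := by rw [← Finset.sum_range_succ]
    _ ≤ 2 * (S (j + 1) ^ 2 + a (j + 1) ^ 2) := add_sq_le
    _ ≤ 2 * (S (j + 1) * S (j + 3) + C * (S (j + 1) * S (j + 3))) := by
      rw [sq (S (j + 1))]
      gcongr 2 * (_ * ?_ + ?_)
      · exact hSnonneg _
      · exact hmono (by lia)
      · refine h.trans ?_
        gcongr
        exacts [ha _, hSnonneg _, hlast _, hlast _]
    _ = 2 * (1 + C) * (S (j + 1) * S (j + 3)) := by ring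

variable {N : ℕ → ℝ} {C : ℝ} {k : ℕ}

lemma pow_succ_le_mul_pow_mul_of_sq_le (hN : ∀ j, 0 ≤ N j) (hC : 0 ≤ C)
    (h : ∀ j, j + 2 ≤ k → N (j + 1) ^ 2 ≤ C * (N j * N (j + 2))) {j : ℕ} (hj : j + 1 ≤ k) :
    N j ^ (j + 1) ≤ C ^ (∑ i ∈ Finset.range (j + 1), i) * N (j + 1) ^ j * N 0 := by
  induction j with
  | zero => simp
  | succ j ih =>
    set T := ∑ i ∈ Finset.range (j + 1), i
    rw [Finset.sum_range_succ]
    obtain hzero | hpos := (hN (j + 1)).eq_or_lt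
    · rw [← hzero, zero_pow (by lia)]
      exact mul_nonneg (mul_nonneg (by positivity) (pow_nonneg (hN _) _)) (hN 0)
    · refine le_of_mul_le_mul_left ?_ (pow_pos hpos j)
      calc N (j + 1) ^ j * N (j + 1) ^ (j + 1 + 1) = (N (j + 1) ^ 2) ^ (j + 1) := by ring
        _ ≤ (C * (N j * N (j + 2))) ^ (j + 1) := by gcongr; exact h j hj
        _ = C ^ (j + 1) * N (j + 2) ^ (j + 1) * N j ^ (j + 1) := by ring
        _ ≤ C ^ (j + 1) * N (j + 2) ^ (j + 1) * (C ^ T * N (j + 1) ^ j * N 0) := by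
          have := hN (j + 2)
          gcongr
          exact ih (by lia)
        _ = N (j + 1) ^ j * (C ^ (T + (j + 1)) * N (j + 1 + 1) ^ (j + 1) * N 0) := by ring

lemma le_rpow_mul_rpow_mul_rpow_of_pow_le {x y z D : ℝ} (hx : 0 ≤ x) (hy : 0 ≤ y) (hz : 0 ≤ z)
    (hD : 0 ≤ D) (hk : k ≠ 0) (h : x ^ k ≤ D * y ^ (k - 1) * z) :
    x ≤ D ^ (1 / (k : ℝ)) * y ^ (1 - 1 / (k : ℝ)) * z ^ (1 / (k : ℝ)) := by
  have hexp : ((k - 1 : ℕ) : ℝ) * (1 / (k : ℝ)) = 1 - 1 / (k : ℝ) := by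
    rw [Nat.cast_pred (Nat.pos_of_ne_zero hk)]
    field_simp
  calc x = (x ^ k) ^ (1 / (k : ℝ)) := by rw [one_div, Real.pow_rpow_inv_natCast hx hk]
    _ ≤ (D * y ^ (k - 1) * z) ^ (1 / (k : ℝ)) := by gcongr
    _ = D ^ (1 / (k : ℝ)) * y ^ (1 - 1 / (k : ℝ)) * z ^ (1 / (k : ℝ)) := by
      rw [Real.mul_rpow (by positivity) hz, Real.mul_rpow hD (by positivity),
        ← Real.rpow_natCast_mul hy, hexp]

theorem pred_le_rpow_mul_rpow_mul_rpow_of_sq_le (hN : ∀ j, 0 ≤ N j) (hC : 0 ≤ C) (hk : k ≠ 0)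
    (h : ∀ j, j + 2 ≤ k → N (j + 1) ^ 2 ≤ C * (N j * N (j + 2))) :
    N (k - 1) ≤ (C ^ ∑ i ∈ Finset.range k, i) ^ (1 / (k : ℝ)) *
      N k ^ (1 - 1 / (k : ℝ)) * N 0 ^ (1 / (k : ℝ)) := by
  have hk₁ : k - 1 + 1 = k := Nat.succ_pred_eq_of_ne_zero hk
  have hpow := pow_succ_le_mul_pow_mul_of_sq_le hN hC h hk₁.le
  rw [hk₁] at hpow
  exact le_rpow_mul_rpow_mul_rpow_of_pow_le (hN _) (hN _) (hN _) (by positivity) hk hpow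

end LogConvexity

section SobolevNorm

variable {E F : Type*} [NormedAddCommGroup E] [NormedSpace ℝ E] [NormedAddCommGroup F]
  [NormedSpace ℝ F]

set_option maxSynthPendingDepth 3 in
lemma norm_fderiv_fderiv_iteratedFDeriv (f : E → F) (j : ℕ) (x : E) :
    ‖fderiv ℝ (fderiv ℝ (iteratedFDeriv ℝ j f)) x‖ = ‖iteratedFDeriv ℝ (j + 2) f x‖ := by
  rw [← norm_fderiv_iteratedFDeriv, iteratedFDeriv_succ_eq_comp_left (n := j),
    ← norm_iteratedFDeriv_one, ← norm_iteratedFDeriv_one,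
    LinearIsometryEquiv.norm_iteratedFDeriv_comp_left]

variable [MeasurableSpace E]

/-- The `H^m` norm of `f : E → F` with respect to `μ`, computed with the operator norms of the
iterated Fréchet derivatives of `f` as a function on the whole space. -/
def sobolevNorm (m : ℕ) (μ : Measure E) (f : E → F) : ℝ :=
  √(∑ j ∈ Finset.range (m + 1), ∫ x, ‖iteratedFDeriv ℝ j f x‖ ^ 2 ∂μ)

lemma sobolevNorm_zero (μ : Measure E) (f : E → F) :
    sobolevNorm 0 μ f = √(∫ x, ‖f x‖ ^ 2 ∂μ) := by
  simp [sobolevNorm]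

variable [BorelSpace E] {μ : Measure E} [μ.IsAddRightInvariant] [SFinite μ] {ι : Type*}
  (b : Module.Basis ι ℝ E)

section Fintype

variable [Fintype ι] {O : Set E} {f : E → F} {j : ℕ}

set_option maxSynthPendingDepth 3 in
lemma sq_mul_setIntegral_norm_iteratedFDeriv_sq_le (hO : IsOpen O)
    (hb : ∀ i, IsRecessionDirection O (b i)) (hf : ContDiffOn ℝ (j + 2) f O)
    (hint : ∀ i ≤ j + 2, IntegrableOn (fun x => ‖iteratedFDeriv ℝ i f x‖ ^ 2) O μ)
    {t : ℝ} (ht : 0 ≤ t) :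
    t ^ 2 * ∫ x in O, ‖iteratedFDeriv ℝ (j + 1) f x‖ ^ 2 ∂μ ≤
      interpolationConst b * (∫ x in O, ‖iteratedFDeriv ℝ j f x‖ ^ 2 ∂μ +
        t ^ 4 * ∫ x in O, ‖iteratedFDeriv ℝ (j + 2) f x‖ ^ 2 ∂μ) := by
  have hG : ContDiffOn ℝ 2 (iteratedFDeriv ℝ j f) O := fun x hx =>
    ((hf.contDiffAt (hO.mem_nhds hx)).iteratedFDeriv_right (by rw [add_comm])).contDiffWithinAt
  have hlintegral := setLIntegral_enorm_fderiv_sq_le (μ := μ) b hO hb hG ht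
  have hfirst (x : E) : ‖fderiv ℝ (iteratedFDeriv ℝ j f) x‖ₑ = ‖iteratedFDeriv ℝ (j + 1) f x‖ₑ := by
    rw [← ofReal_norm, norm_fderiv_iteratedFDeriv, ofReal_norm]
  have hsecond (x : E) : ‖fderiv ℝ (fderiv ℝ (iteratedFDeriv ℝ j f)) x‖ₑ =
      ‖iteratedFDeriv ℝ (j + 2) f x‖ₑ := by
    rw [← ofReal_norm, norm_fderiv_fderiv_iteratedFDeriv, ofReal_norm]
  simp only [hfirst, hsecond, lintegral_enorm_sq_eq_ofReal_integral (hint j (by lia)),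
    lintegral_enorm_sq_eq_ofReal_integral (hint (j + 1) (by lia)),
    lintegral_enorm_sq_eq_ofReal_integral (hint (j + 2) le_rfl)] at hlintegral
  rw [← ENNReal.ofReal_le_ofReal_iff (by positivity), ENNReal.ofReal_mul (by positivity),
    ENNReal.ofReal_mul (by positivity), ENNReal.ofReal_add (by positivity) (by positivity),
    ENNReal.ofReal_mul (by positivity), ENNReal.ofReal_pow ht, ENNReal.ofReal_pow ht,
    ENNReal.ofReal_coe_nnreal]
  exact hlintegral

theorem sq_setIntegral_norm_iteratedFDeriv_sq_le (hO : IsOpen O)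
    (hb : ∀ i, IsRecessionDirection O (b i)) (hf : ContDiffOn ℝ (j + 2) f O)
    (hint : ∀ i ≤ j + 2, IntegrableOn (fun x => ‖iteratedFDeriv ℝ i f x‖ ^ 2) O μ) :
    (∫ x in O, ‖iteratedFDeriv ℝ (j + 1) f x‖ ^ 2 ∂μ) ^ 2 ≤ 4 * (interpolationConst b : ℝ) ^ 2 *
      ((∫ x in O, ‖iteratedFDeriv ℝ j f x‖ ^ 2 ∂μ) *
        ∫ x in O, ‖iteratedFDeriv ℝ (j + 2) f x‖ ^ 2 ∂μ) :=
  sq_le_four_mul_sq_mul_of_forall_pos (by positivity) (by positivity) (by positivity)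
    (by positivity) fun _ ht => sq_mul_setIntegral_norm_iteratedFDeriv_sq_le b hO hb hf hint ht.le

lemma sobolevNorm_succ_sq_le (hO : IsOpen O)
    (hb : ∀ i, IsRecessionDirection O (b i)) (hf : ContDiffOn ℝ (j + 2) f O)
    (hint : ∀ i ≤ j + 2, IntegrableOn (fun x => ‖iteratedFDeriv ℝ i f x‖ ^ 2) O μ) :
    sobolevNorm (j + 1) (μ.restrict O) f ^ 2 ≤
      √(2 * (1 + 4 * (interpolationConst b : ℝ) ^ 2)) *
        (sobolevNorm j (μ.restrict O) f * sobolevNorm (j + 2) (μ.restrict O) f) := by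
  have hsums := sq_sum_range_succ_le
    (a := fun i => ∫ x in O, ‖iteratedFDeriv ℝ i f x‖ ^ 2 ∂μ) (fun i => by positivity)
    (by positivity) (sq_setIntegral_norm_iteratedFDeriv_sq_le b hO hb hf hint)
  simp only [sobolevNorm]
  rw [Real.sq_sqrt (by positivity), ← Real.sqrt_mul (by positivity),
    ← Real.sqrt_mul (by positivity)]
  exact Real.le_sqrt_of_sq_le hsums

end Fintype

variable (μ F) in
theorem exists_sobolevNorm_pred_le [Finite ι] {k : ℕ} (hk : k ≠ 0) :
    ∃ C : ℝ, 0 < C ∧ ∀ {O : Set E} {f : E → F}, IsOpen O → (∀ i, IsRecessionDirection O (b i)) →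
      ContDiffOn ℝ k f O →
      (∀ j ≤ k, IntegrableOn (fun x => ‖iteratedFDeriv ℝ j f x‖ ^ 2) O μ) →
      sobolevNorm (k - 1) (μ.restrict O) f ≤
        C * sobolevNorm k (μ.restrict O) f ^ (1 - 1 / (k : ℝ)) *
          sobolevNorm 0 (μ.restrict O) f ^ (1 / (k : ℝ)) := by
  have := Fintype.ofFinite ι
  set D := √(2 * (1 + 4 * (interpolationConst b : ℝ) ^ 2))
  have hD : 0 < D := by positivity
  refine ⟨(D ^ ∑ i ∈ Finset.range k, i) ^ (1 / (k : ℝ)), by positivity, ?_⟩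
  intro O f hO hb hf hint
  exact pred_le_rpow_mul_rpow_mul_rpow_of_sq_le (N := fun j => sobolevNorm j (μ.restrict O) f)
    (fun _ => Real.sqrt_nonneg _) hD.le hk fun j hj => sobolevNorm_succ_sq_le b hO hb
      (hf.of_le (mod_cast hj)) fun i hi => hint i (hi.trans hj)

end SobolevNorm

section PerturbedHalfSpace

variable {M : E2 → ℝ} {L : ℝ≥0}

lemma proj2_add_smul (x v : E3) (t : ℝ) : proj2 (x + t • v) = proj2 x + t • proj2 v := by
  ext i
  fin_cases i <;> simp [proj2]

lemma isOpen_Omg (hM : Continuous M) : IsOpen (Omg M) := by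
  have hproj : Continuous proj2 := (PiLp.continuous_toLp 2 _).comp <| by
    refine continuous_pi (Fin.forall_fin_two.2 ⟨?_, ?_⟩)
    exacts [EuclideanSpace.proj (𝕜 := ℝ) 1 |>.continuous,
      EuclideanSpace.proj (𝕜 := ℝ) 2 |>.continuous]
  exact isOpen_lt (hM.comp hproj) (by fun_prop)

lemma isRecessionDirection_Omg (hM : LipschitzWith L M) {v : E3} (hv : L * ‖proj2 v‖ ≤ v 0) :
    IsRecessionDirection (Omg M) v := fun x (hx : M (proj2 x) < x 0) t ht => by
  change M (proj2 (x + t • v)) < (x + t • v) 0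
  calc M (proj2 (x + t • v)) = M (proj2 x + t • proj2 v) := by rw [proj2_add_smul]
    _ ≤ M (proj2 x) + L * ‖t • proj2 v‖ := by
      simpa using hM.le_add_mul (proj2 x + t • proj2 v) (proj2 x)
    _ = M (proj2 x) + t * (L * ‖proj2 v‖) := by
      rw [norm_smul, Real.norm_of_nonneg ht, mul_left_comm]
    _ < x 0 + t * v 0 := add_lt_add_of_lt_of_le hx (by gcongr)
    _ = (x + t • v) 0 := by simp

/-- The basis `e₀, e₁ + L e₀, e₂ + L e₀` of `ℝ³`: the standard basis tilted into the cone
`L |v'| ≤ v₀`, whose vectors point into every `L`-Lipschitz epigraph. -/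
def coneBasis (L : ℝ≥0) : Module.Basis (Fin 3) ℝ E3 :=
  (EuclideanSpace.basisFun (Fin 3) ℝ).toBasis.map <|
    LinearEquiv.transvection
      (f := (L : ℝ) • (EuclideanSpace.projₗ (𝕜 := ℝ) (1 : Fin 3) + EuclideanSpace.projₗ 2))
      (v := EuclideanSpace.single 0 1) (by simp)

lemma mul_norm_proj2_coneBasis_le (L : ℝ≥0) (i : Fin 3) :
    L * ‖proj2 (coneBasis L i)‖ ≤ coneBasis L i 0 := by
  fin_cases i <;>
    simp [coneBasis, proj2, EuclideanSpace.norm_eq, LinearMap.transvection.apply]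

end PerturbedHalfSpace

theorem gagliardo_nirenberg_general {F : Type*} [NormedAddCommGroup F] [NormedSpace ℝ F]
    (L : ℝ≥0) {k : ℕ} (hk : k ≠ 0) :
    ∃ C : ℝ, 0 < C ∧ ∀ {M : E2 → ℝ} {f : E3 → F}, LipschitzWith L M → ContDiffOn ℝ k f (Omg M) →
      (∀ j ≤ k, IntegrableOn (fun x => ‖iteratedFDeriv ℝ j f x‖ ^ 2) (Omg M)) →
      sobolevNorm (k - 1) (volume.restrict (Omg M)) f ≤
        C * sobolevNorm k (volume.restrict (Omg M)) f ^ (1 - 1 / (k : ℝ)) *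
          √(∫ x in Omg M, ‖f x‖ ^ 2) ^ (1 / (k : ℝ)) := by
  obtain ⟨C, hC, hinterp⟩ := exists_sobolevNorm_pred_le F volume (coneBasis L) hk
  refine ⟨C, hC, fun {M f} hM hf hint => ?_⟩
  rw [← sobolevNorm_zero]
  exact hinterp (isOpen_Omg hM.continuous)
    (fun i => isRecessionDirection_Omg hM (mul_norm_proj2_coneBasis_le L i)) hf hint

theorem gagliardo_nirenberg (M : E2 → ℝ) (hM : ContDiff ℝ (⊤ : ℕ∞) M)
    (hMint : ∀ j ≤ 9, Integrable fun x' : E2 => ‖iteratedFDeriv ℝ j M x'‖ ^ 2)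
    (k : ℕ) (hk : 2 ≤ k) :
    ∃ C : ℝ, 0 < C ∧
      ∀ f : E3 → ℝ, ContDiffOn ℝ k f (closure (Omg M)) →
        (∀ j ≤ k, IntegrableOn (fun x => ‖iteratedFDeriv ℝ j f x‖ ^ 2) (Omg M)) →
        sobNorm (k - 1) (Omg M) f ≤
          C * sobNorm k (Omg M) f ^ (1 - 1 / (k:ℝ)) *
            Real.sqrt (∫ x in Omg M, f x ^ 2) ^ (1 / (k:ℝ)) := by
  obtain ⟨L, hL⟩ : ∃ L, LipschitzWith L M := exists_lipschitzWith_of_integrable_iteratedFDeriv_sq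
    (hM.of_le (mod_cast le_top)) fun j hj => hMint (j + 1) (by grind [Fintype.card_fin])
  obtain ⟨C, hC, hGN⟩ := gagliardo_nirenberg_general (F := ℝ) L (by lia : k ≠ 0)
  simp only [Real.norm_eq_abs, sq_abs] at hGN
  exact ⟨C, hC, fun f hf hint => hGN hL (hf.mono subset_closure) hint⟩
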